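/- Let a ∈ (0,1), n̂ > 0, p* ∈ ℝⁿ, and let {p[k]}_{k≥0} be a sequence in ℝⁿ and {z[k]}_{k≥0} a sequence of vectors such that ‖p[k] − p*‖₂ ≤ ‖z[k]‖₂ for all k ≥ 0 (e.g., z[k] = (p[k] − p*, λ̂[k] − λ*)). Define δ[0] arbitrary in ℝⁿ and δ[k] := n̂(p[k] − p[k−1]) for k ≥ 1. Then for every K ≥ 0: ‖δ‖₂^{a,K} ≤ (2n̂/a)·‖z‖₂^{a,K} + ‖δ[0]‖₂. -/

import Mathlib

/-- Euclidean norm of a vector in ℝ^d. -/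
noncomputable def eunorm {d : ℕ} (x : Fin d → ℝ) : ℝ := Real.sqrt (∑ i, (x i) ^ 2)

/-- The weighted norm ‖x‖₂^{a,K} = max_{0 ≤ k ≤ K} a^{-k} ‖x[k]‖₂. -/
noncomputable def wnormSeq {d : ℕ} (a : ℝ) (x : ℕ → Fin d → ℝ) (K : ℕ) : ℝ :=
  (Finset.range (K + 1)).sup' (Finset.nonempty_range_iff.mpr (Nat.succ_ne_zero K))
    fun k => eunorm (x k) / a ^ k

theorem eunorm_eq_norm {d : ℕ} (x : Fin d → ℝ) : eunorm x = ‖WithLp.toLp 2 x‖ := by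
  simp [eunorm, EuclideanSpace.norm_eq]

theorem eunorm_step {n : ℕ} (c : ℝ) (hc : 0 < c) (x y s : Fin n → ℝ) :
    eunorm (fun i => c * (x i - y i)) ≤
      c * (eunorm (fun i => x i - s i) + eunorm (fun i => y i - s i)) := by
  simp only [eunorm_eq_norm]
  have h : (WithLp.toLp 2 (fun i => c * (x i - y i)) : EuclideanSpace ℝ (Fin n)) =
      c • (WithLp.toLp 2 (fun i => x i - s i) - WithLp.toLp 2 (fun i => y i - s i)) := by
    ext i
    simp
  rw [h, norm_smul, Real.norm_of_nonneg hc.le]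
  exact mul_le_mul_of_nonneg_left (norm_sub_le _ _) hc.le

theorem le_wnormSeq {d : ℕ} (a : ℝ) (x : ℕ → Fin d → ℝ) (K k : ℕ) (hk : k < K + 1) :
    eunorm (x k) / a ^ k ≤ wnormSeq a x K :=
  Finset.le_sup' (fun k => eunorm (x k) / a ^ k) (Finset.mem_range.mpr hk)

theorem stmt10 {n d : ℕ} (a : ℝ) (ha : a ∈ Set.Ioo (0 : ℝ) 1)
    (nhat : ℝ) (hnhat : 0 < nhat)
    (pstar : Fin n → ℝ) (p : ℕ → Fin n → ℝ) (z : ℕ → Fin d → ℝ)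
    (hpz : ∀ k : ℕ, eunorm (fun i => p k i - pstar i) ≤ eunorm (z k))
    (δ : ℕ → Fin n → ℝ)
    (hδ : ∀ k : ℕ, δ (k + 1) = fun i => nhat * (p (k + 1) i - p k i)) :
    ∀ K : ℕ, wnormSeq a δ K ≤ (2 * nhat / a) * wnormSeq a z K + eunorm (δ 0) := by
  intro K
  obtain ⟨ha0, ha1⟩ := ha
  have hW : 0 ≤ wnormSeq a z K := by
    refine le_trans ?_ (le_wnormSeq a z K 0 (by omega))
    simp [eunorm]
  have hd : 0 ≤ eunorm (δ 0) := Real.sqrt_nonneg _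
  refine Finset.sup'_le _ _ ?_
  intro k hk
  rw [Finset.mem_range] at hk
  rcases k with _ | k
  · have : 0 ≤ (2 * nhat / a) * wnormSeq a z K := by positivity
    simp only [pow_zero, div_one]
    linarith
  · have h1 := le_wnormSeq a z K (k + 1) hk
    have h2 := le_wnormSeq a z K k (by omega)
    have hs := eunorm_step nhat hnhat (p (k + 1)) (p k) pstar
    rw [← hδ k] at hs
    have hak : 0 < a ^ k := pow_pos ha0 k
    have hak1 : 0 < a ^ (k + 1) := pow_pos ha0 _
    rw [div_le_iff₀ hak1] at h1
    rw [div_le_iff₀ hak] at h2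
    have h3 : a ^ (k + 1) ≤ a ^ k := by
      rw [pow_succ]; nlinarith
    have h4 : eunorm (z (k + 1)) + eunorm (z k) ≤ 2 * (wnormSeq a z K * a ^ k) := by
      have := mul_le_mul_of_nonneg_left h3 hW
      linarith
    have h5 : eunorm (δ (k + 1)) ≤ nhat * (2 * (wnormSeq a z K * a ^ k)) :=
      hs.trans (mul_le_mul_of_nonneg_left
        ((add_le_add (hpz (k + 1)) (hpz k)).trans h4) hnhat.le)
    have h6 : eunorm (δ (k + 1)) / a ^ (k + 1) ≤ (2 * nhat / a) * wnormSeq a z K := by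
      rw [div_le_iff₀ hak1]
      refine h5.trans (le_of_eq ?_)
      rw [pow_succ]
      field_simp
    linarith
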